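/- arXiv:0904.3268 — 2 statements merged into one kernel-verified Lean document; each statement's English description precedes it below -/
import Mathlib

section
/- Let A be a normed algebra with an m-bounded approximate left identity, let X be a normed space, and let π_l : A → B(X) be a bounded algebra homomorphism making X a non-degenerate normed left A-module. Then π_l vanishes on the kernel of the canonical map λ : A → M_l(A), and hence there is a unique map π̃_l : λ(A) → B(X) with π̃_l ∘ λ = π_l; this π̃_l is a bounded algebra homomorphism with ‖π̃_l‖ ≤ m‖π_l‖, making X a non-degenerate normed left λ(A)-module, and one has π̃_l(λ(a))x = lim_i π_l(λ(a) e_i)x for every a ∈ A, x ∈ X, and every bounded approximate left identity (e_i) of A. -/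
open Filter Topology

/-!
A bounded approximate left identity `e` of `A` gives a bounded, hence equicontinuous, family of
operators `π (e i)`. It converges strongly to the identity on the vectors `π a z`, because
`π (e i) (π a z) = π (e i * a) z`, and therefore on all of `X` by non-degeneracy. Applying `π a`,
we get `π (a * e i) x → π a x`. As `a * e i = λ(a) (e i)` has norm at most `m * ‖λ(a)‖`, the limit
satisfies `‖π a‖ ≤ m * ‖π‖ * ‖λ(a)‖`, so that `π` factors through `λ` with the required bound.
-/

section StrongConvergence

variable {R E F ι : Type*} [Semiring R] [AddCommMonoid E] [Module R E] [AddCommMonoid F]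
  [Module R F] {l : Filter ι} {T : ι → E →ₗ[R] F} {s : Set E}

theorem tendsto_apply_of_mem_span [TopologicalSpace F] [ContinuousAdd F] [ContinuousConstSMul R F]
    {S : E →ₗ[R] F} (hs : ∀ y ∈ s, Tendsto (fun i => T i y) l (𝓝 (S y)))
    {x : E} (hx : x ∈ Submodule.span R s) : Tendsto (fun i => T i x) l (𝓝 (S x)) := by
  induction hx using Submodule.span_induction with
  | mem y hy => exact hs y hy
  | zero => simpa only [map_zero] using tendsto_const_nhds
  | add y z _ _ hy hz => simpa only [map_add] using hy.add hz
  | smul c y _ hy => simpa only [map_smul] using hy.const_smul c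

theorem tendsto_apply_of_dense_span [TopologicalSpace E] [UniformSpace F] [ContinuousAdd F]
    [ContinuousConstSMul R F] {S : E →L[R] F} (hT : Equicontinuous fun i => ⇑(T i))
    (hdense : Dense (Submodule.span R s : Set E))
    (hs : ∀ y ∈ s, Tendsto (fun i => T i y) l (𝓝 (S y))) (x : E) :
    Tendsto (fun i => T i x) l (𝓝 (S x)) :=
  (hT x).tendsto_of_mem_closure S.continuous.continuousWithinAt
    (fun _ hy => tendsto_apply_of_mem_span (S := (S : E →ₗ[R] F)) hs hy) (hdense x)

end StrongConvergence

theorem equicontinuous_of_forall_norm_le {𝕜 E F ι : Type*} [NontriviallyNormedField 𝕜]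
    [SeminormedAddCommGroup E] [NormedSpace 𝕜 E] [SeminormedAddCommGroup F] [NormedSpace 𝕜 F]
    {T : ι → E →L[𝕜] F} {C : ℝ} (hT : ∀ i, ‖T i‖ ≤ C) : Equicontinuous fun i => ⇑(T i) := by
  have hbdd : ∃ C, ∀ i, ‖T i‖ ≤ C := ⟨C, hT⟩
  exact ((NormedSpace.equicontinuous_TFAE T).out 5 1).1 hbdd

/-- An `m`-bounded approximate left identity of `A`. In place of a net we allow a family `e`
indexed by any type, with limits taken along an arbitrary filter `l`. -/
structure IsBoundedApproxLeftIdentity {A ι : Type*} [NonUnitalSeminormedRing A]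
    (l : Filter ι) (e : ι → A) (m : ℝ) : Prop where
  norm_le : ∀ i, ‖e i‖ ≤ m
  tendsto_mul : ∀ a, Tendsto (fun i => e i * a) l (𝓝 a)

/-- Non-degeneracy of an action by bounded operators: the vectors `π a x` span a dense subspace.
The action is a bare map, so that the notion applies both to `π` on `A` and to the induced map on
the subtype `λ(A)`. -/
def IsNondegenerateAction {𝕜 α X : Type*} [NontriviallyNormedField 𝕜] [SeminormedAddCommGroup X]
    [NormedSpace 𝕜 X] (π : α → X →L[𝕜] X) : Prop :=
  Dense (Submodule.span 𝕜 (Set.range fun p : α × X => π p.1 p.2) : Set X)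

theorem IsNondegenerateAction.of_factorization {𝕜 α β X : Type*} [NontriviallyNormedField 𝕜]
    [SeminormedAddCommGroup X] [NormedSpace 𝕜 X] {π : α → X →L[𝕜] X} {σ : β → X →L[𝕜] X}
    {f : α → β} (hπ : IsNondegenerateAction π) (hσ : ∀ a, σ (f a) = π a) :
    IsNondegenerateAction σ := by
  refine hπ.mono (Submodule.span_mono ?_)
  rintro _ ⟨⟨a, x⟩, rfl⟩
  exact ⟨(f a, x), DFunLike.congr_fun (hσ a) x⟩

namespace IsBoundedApproxLeftIdentity

variable {𝕜 A X ι : Type*} [NontriviallyNormedField 𝕜] [NonUnitalSeminormedRing A]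
  [NormedSpace 𝕜 A] {l : Filter ι} {e : ι → A} {m : ℝ}

section Seminormed

variable [SeminormedAddCommGroup X] [NormedSpace 𝕜 X] {π : A →L[𝕜] X →L[𝕜] X}

theorem tendsto_apply (he : IsBoundedApproxLeftIdentity l e m)
    (hπmul : ∀ a b, π (a * b) = π a * π b) (hπ : IsNondegenerateAction π) (x : X) :
    Tendsto (fun i => π (e i) x) l (𝓝 x) := by
  have hequi : Equicontinuous fun i => ⇑(π (e i)) :=
    equicontinuous_of_forall_norm_le fun i => π.le_opNorm_of_le (he.norm_le i)
  refine tendsto_apply_of_dense_span (T := fun i => (π (e i) : X →ₗ[𝕜] X))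
    (S := ContinuousLinearMap.id 𝕜 X) hequi hπ ?_ x
  rintro _ ⟨⟨a, z⟩, rfl⟩
  have hlim : Tendsto (fun i => π (e i * a) z) l (𝓝 (π a z)) :=
    ((π.flip z).continuous.tendsto a).comp (he.tendsto_mul a)
  simpa [hπmul] using hlim

theorem tendsto_apply_mul (he : IsBoundedApproxLeftIdentity l e m)
    (hπmul : ∀ a b, π (a * b) = π a * π b) (hπ : IsNondegenerateAction π) (a : A) (x : X) :
    Tendsto (fun i => π (a * e i) x) l (𝓝 (π a x)) := by
  simpa [hπmul, Function.comp_def] using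
    ((π a).continuous.tendsto x).comp (he.tendsto_apply hπmul hπ x)

theorem norm_apply_le [IsScalarTower 𝕜 A A] [SMulCommClass 𝕜 A A] [l.NeBot]
    (he : IsBoundedApproxLeftIdentity l e m) (hπmul : ∀ a b, π (a * b) = π a * π b)
    (hπ : IsNondegenerateAction π) (a : A) :
    ‖π a‖ ≤ m * ‖π‖ * ‖ContinuousLinearMap.mul 𝕜 A a‖ := by
  obtain ⟨i₀⟩ := l.nonempty_of_neBot
  have hm : 0 ≤ m := (norm_nonneg _).trans (he.norm_le i₀)
  refine (π a).opNorm_le_bound (by positivity) fun x => ?_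
  refine le_of_tendsto (he.tendsto_apply_mul hπmul hπ a x).norm (.of_forall fun i => ?_)
  have hmul : ‖a * e i‖ ≤ ‖ContinuousLinearMap.mul 𝕜 A a‖ * m :=
    (ContinuousLinearMap.mul 𝕜 A a).le_opNorm_of_le (he.norm_le i)
  calc ‖π (a * e i) x‖
      ≤ ‖π‖ * (‖ContinuousLinearMap.mul 𝕜 A a‖ * m) * ‖x‖ :=
        π.le_of_opNorm₂_le_of_le le_rfl hmul le_rfl
    _ = m * ‖π‖ * ‖ContinuousLinearMap.mul 𝕜 A a‖ * ‖x‖ := by ring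

end Seminormed

variable [IsScalarTower 𝕜 A A] [SMulCommClass 𝕜 A A] [NormedAddCommGroup X] [NormedSpace 𝕜 X]
  {π : A →L[𝕜] X →L[𝕜] X} [l.NeBot]

theorem apply_eq_zero_of_mul_eq_zero (he : IsBoundedApproxLeftIdentity l e m)
    (hπmul : ∀ a b, π (a * b) = π a * π b) (hπ : IsNondegenerateAction π) {a : A}
    (ha : ContinuousLinearMap.mul 𝕜 A a = 0) : π a = 0 := by
  simpa only [ha, norm_zero, mul_zero, norm_le_zero_iff] using he.norm_apply_le hπmul hπ a

theorem factorsThrough_mul (he : IsBoundedApproxLeftIdentity l e m)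
    (hπmul : ∀ a b, π (a * b) = π a * π b) (hπ : IsNondegenerateAction π) :
    Function.FactorsThrough π (ContinuousLinearMap.mul 𝕜 A) := by
  intro a b hab
  have hker : π (a - b) = 0 :=
    he.apply_eq_zero_of_mul_eq_zero hπmul hπ (by rw [map_sub, hab, sub_self])
  rwa [map_sub, sub_eq_zero] at hker

end IsBoundedApproxLeftIdentity

theorem induced_module_on_lambda_image_general
    {𝕜 : Type*} [NontriviallyNormedField 𝕜]
    {A : Type*} [NonUnitalSeminormedRing A] [NormedSpace 𝕜 A]
    [IsScalarTower 𝕜 A A] [SMulCommClass 𝕜 A A]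
    {X : Type*} [NormedAddCommGroup X] [NormedSpace 𝕜 X]
    (m : ℝ) {ι : Type*} (l : Filter ι) [l.NeBot] (e : ι → A)
    (he_bdd : ∀ i, ‖e i‖ ≤ m)
    (he_lim : ∀ a : A, Tendsto (fun i => e i * a) l (𝓝 a))
    (π : A →L[𝕜] X →L[𝕜] X)
    (hπmul : ∀ a b : A, π (a * b) = π a * π b)
    (hnd : Dense (Submodule.span 𝕜 (Set.range fun p : A × X => π p.1 p.2) : Set X)) :
    (∀ a : A, ContinuousLinearMap.mul 𝕜 A a = 0 → π a = 0) ∧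
    (∃ πt : (Set.range fun a : A => ContinuousLinearMap.mul 𝕜 A a) → X →L[𝕜] X,
      (∀ a : A, πt ⟨ContinuousLinearMap.mul 𝕜 A a, a, rfl⟩ = π a) ∧
      (∀ a : A, ‖π a‖ ≤ m * ‖π‖ * ‖ContinuousLinearMap.mul 𝕜 A a‖) ∧
      Dense (Submodule.span 𝕜
        (Set.range fun p :
          (Set.range fun a : A => ContinuousLinearMap.mul 𝕜 A a) × X =>
            πt p.1 p.2) : Set X) ∧
      (∀ (κ : Type*) (l' : Filter κ), l'.NeBot → ∀ (e' : κ → A) (m' : ℝ),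
        (∀ i, ‖e' i‖ ≤ m') →
        (∀ a : A, Tendsto (fun i => e' i * a) l' (𝓝 a)) →
        ∀ (a : A) (x : X),
          Tendsto (fun i => π (ContinuousLinearMap.mul 𝕜 A a (e' i)) x) l'
            (𝓝 (πt ⟨ContinuousLinearMap.mul 𝕜 A a, a, rfl⟩ x))) ∧
      (∀ σ : (Set.range fun a : A => ContinuousLinearMap.mul 𝕜 A a) → X →L[𝕜] X,
        (∀ a : A, σ ⟨ContinuousLinearMap.mul 𝕜 A a, a, rfl⟩ = π a) → σ = πt)) := by
  have he : IsBoundedApproxLeftIdentity l e m := ⟨he_bdd, he_lim⟩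
  have hπ : IsNondegenerateAction π := hnd
  let πt : (Set.range fun a : A => ContinuousLinearMap.mul 𝕜 A a) → X →L[𝕜] X :=
    fun T => Function.extend (ContinuousLinearMap.mul 𝕜 A) π 0 T
  have hπt (a : A) : πt ⟨ContinuousLinearMap.mul 𝕜 A a, a, rfl⟩ = π a :=
    (he.factorsThrough_mul hπmul hπ).extend_apply 0 a
  refine ⟨fun a ha => he.apply_eq_zero_of_mul_eq_zero hπmul hπ ha, πt, hπt,
    he.norm_apply_le hπmul hπ, hπ.of_factorization hπt, ?_, ?_⟩
  · intro κ l' _ e' m' hbdd hlim a x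
    rw [hπt]
    exact IsBoundedApproxLeftIdentity.tendsto_apply_mul ⟨hbdd, hlim⟩ hπmul hπ a x
  · intro σ hσ
    funext ⟨_, a, rfl⟩
    exact (hσ a).trans (hπt a).symm

/-- **The induced module structure for `λ(A)`.** Let `A` be a normed algebra with an
`m`-bounded approximate left identity, `X` a normed space, and `π_l : A → B(X)` a bounded
algebra homomorphism making `X` a non-degenerate normed left `A`-module. Then `π_l` vanishes
on the kernel of the canonical map `λ : A → M_l(A)` (`λ(a)b = ab`), and there is a unique map
`π̃_l : λ(A) → B(X)` with `π̃_l ∘ λ = π_l`; it is a bounded algebra homomorphism with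
`‖π̃_l‖ ≤ m‖π_l‖`, it makes `X` a non-degenerate normed left `λ(A)`-module, and
`π̃_l(λ(a))x = lim_i π_l(λ(a)e_i)x` for every bounded approximate left identity `(e_i)`. -/
theorem induced_module_on_lambda_image
    {𝕜 : Type*} [RCLike 𝕜]
    {A : Type*} [NonUnitalNormedRing A] [NormedSpace 𝕜 A]
    [IsScalarTower 𝕜 A A] [SMulCommClass 𝕜 A A]
    {X : Type*} [NormedAddCommGroup X] [NormedSpace 𝕜 X]
    (m : ℝ) {ι : Type*} (l : Filter ι) [l.NeBot] (e : ι → A)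
    (he_bdd : ∀ i, ‖e i‖ ≤ m)
    (he_lim : ∀ a : A, Tendsto (fun i => e i * a) l (𝓝 a))
    (π : A →L[𝕜] X →L[𝕜] X)
    (hπmul : ∀ a b : A, π (a * b) = π a * π b)
    (hnd : Dense (Submodule.span 𝕜 (Set.range fun p : A × X => π p.1 p.2) : Set X)) :
    -- `π_l` vanishes on the kernel of `λ`
    (∀ a : A, ContinuousLinearMap.mul 𝕜 A a = 0 → π a = 0) ∧
    -- the unique factorization `π̃_l` of `π_l` through `λ(A)`
    (∃ πt : (Set.range fun a : A => ContinuousLinearMap.mul 𝕜 A a) → X →L[𝕜] X,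
      (∀ a : A, πt ⟨ContinuousLinearMap.mul 𝕜 A a, a, rfl⟩ = π a) ∧
      -- `π̃_l` is bounded with `‖π̃_l‖ ≤ m ‖π_l‖`
      (∀ a : A, ‖π a‖ ≤ m * ‖π‖ * ‖ContinuousLinearMap.mul 𝕜 A a‖) ∧
      -- `X` is a non-degenerate normed left `λ(A)`-module via `π̃_l`
      Dense (Submodule.span 𝕜
        (Set.range fun p :
          (Set.range fun a : A => ContinuousLinearMap.mul 𝕜 A a) × X =>
            πt p.1 p.2) : Set X) ∧
      -- `π̃_l(λ(a))x = lim_i π_l(λ(a)e_i)x` for every bounded approximate left identity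
      (∀ (κ : Type*) (l' : Filter κ), l'.NeBot → ∀ (e' : κ → A) (m' : ℝ),
        (∀ i, ‖e' i‖ ≤ m') →
        (∀ a : A, Tendsto (fun i => e' i * a) l' (𝓝 a)) →
        ∀ (a : A) (x : X),
          Tendsto (fun i => π (ContinuousLinearMap.mul 𝕜 A a (e' i)) x) l'
            (𝓝 (πt ⟨ContinuousLinearMap.mul 𝕜 A a, a, rfl⟩ x))) ∧
      -- uniqueness of `π̃_l`
      (∀ σ : (Set.range fun a : A => ContinuousLinearMap.mul 𝕜 A a) → X →L[𝕜] X,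
        (∀ a : A, σ ⟨ContinuousLinearMap.mul 𝕜 A a, a, rfl⟩ = π a) → σ = πt)) :=
  induced_module_on_lambda_image_general m l e he_bdd he_lim π hπmul hnd
end

section
/- Let A be a normed algebra with an m-bounded approximate left identity, let X be a Banach space, and let π_l : A → B(X) be an injective bounded algebra homomorphism making X a non-degenerate faithful normed left A-module, such that π_l^{-1} : π_l(A) → A is bounded. Then π̄_l ∘ φ_l : M(A) → B(X) is an algebra isomorphism from the double centralizer algebra M(A) onto the normalizer N(π_l(A), B(X)); when N(π_l(A), B(X)) carries the operator norm of B(X), one has ‖π̄_l ∘ φ_l‖ ≤ m‖π_l‖ and ‖(π̄_l ∘ φ_l)^{-1}‖ ≤ ‖π_l‖·‖π_l^{-1}‖, the inverse being given by T ↦ (L_T, R_T) where L_T(a) = π_l^{-1}(T π_l(a)) and R_T(a) = π_l^{-1}(π_l(a) T). -/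
open Filter Topology

/-- The left centralizer algebra `M_l(A)`. -/
def LeftCentralizers (𝕜 : Type*) (A : Type*) [RCLike 𝕜] [NonUnitalNormedRing A]
    [NormedSpace 𝕜 A] [IsScalarTower 𝕜 A A] [SMulCommClass 𝕜 A A] :
    Set (A →L[𝕜] A) :=
  {L | ∀ a b : A, L (a * b) = L a * b}

/-- The right centralizer algebra `M_r(A)`. -/
def RightCentralizers (𝕜 : Type*) (A : Type*) [RCLike 𝕜] [NonUnitalNormedRing A]
    [NormedSpace 𝕜 A] [IsScalarTower 𝕜 A A] [SMulCommClass 𝕜 A A] :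
    Set (A →L[𝕜] A) :=
  {R | ∀ a b : A, R (a * b) = a * R b}

/-- `(L, R)` is a double centralizer of `A`. -/
def IsDoubleCentralizer (𝕜 : Type*) {A : Type*} [RCLike 𝕜] [NonUnitalNormedRing A]
    [NormedSpace 𝕜 A] [IsScalarTower 𝕜 A A] [SMulCommClass 𝕜 A A]
    (L R : A →L[𝕜] A) : Prop :=
  L ∈ LeftCentralizers 𝕜 A ∧ R ∈ RightCentralizers 𝕜 A ∧ ∀ a b : A, a * L b = R a * b

/-!
A double centralizer `(L, R)` corresponds to the operator `T = π̄_l(L)` through the two identities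
`T π(a) = π(L a)` and `π(a) T = π(R a)`. They follow from `L ∘ λ(a) = λ(L a)` and
`λ(a) ∘ L = λ(R a)`, because `π̄_l` is multiplicative and extends `π`.

Conversely, if `T` normalizes `π(A)`, then `S ↦ T S` and `S ↦ S T` preserve `π(A)` and hence lift
through the topological embedding `π` to bounded maps `L` and `R`. Non-degeneracy makes `T` unique.
Finally, if `e_i` is the approximate left identity, then `π(L e_i) = T π(e_i)` converges to `T`
pointwise on a dense subspace, which bounds `‖T‖`.
-/

section BoundedOperators

variable {𝕜 E F : Type*} [NontriviallyNormedField 𝕜]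
  [SeminormedAddCommGroup F] [NormedSpace 𝕜 F]

theorem isEmbedding_of_norm_le_mul_norm_map [NormedAddCommGroup E] [NormedSpace 𝕜 E]
    (f : E →L[𝕜] F) {C : ℝ} (hC : ∀ a, ‖a‖ ≤ C * ‖f a‖) : IsEmbedding f := by
  have antilipschitz : AntilipschitzWith C.toNNReal f :=
    f.antilipschitz_of_bound fun a => (hC a).trans <| by gcongr; exact C.le_coe_toNNReal
  exact antilipschitz.isEmbedding f.continuous

theorem exists_map_eq_of_forall_mem_range {R M N P : Type*} [Semiring R]
    [AddCommMonoid M] [Module R M] [TopologicalSpace M]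
    [AddCommMonoid N] [Module R N] [TopologicalSpace N]
    [AddCommMonoid P] [Module R P] [TopologicalSpace P]
    {f : N →L[R] P} (hf : IsEmbedding f) (S : M →L[R] P) (hS : ∀ x, S x ∈ Set.range f) :
    ∃ g : M →L[R] N, ∀ x, f (g x) = S x := by
  let lift : M →ₗ[R] N := (LinearEquiv.ofInjective f.toLinearMap hf.injective).symm ∘ₗ
    S.toLinearMap.codRestrict f.range hS
  have map_lift (x : M) : f (lift x) = S x :=
    congrArg Subtype.val <|
      (LinearEquiv.ofInjective f.toLinearMap hf.injective).apply_symm_apply ⟨S x, hS x⟩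
  have continuous_lift : Continuous lift :=
    hf.continuous_iff.2 <| S.continuous.congr fun x => (map_lift x).symm
  exact ⟨⟨lift, continuous_lift⟩, map_lift⟩

theorem norm_le_of_norm_map_le [SeminormedAddCommGroup E] [NormedSpace 𝕜 E]
    {f : E →L[𝕜] F} {C : ℝ} (hC : ∀ a, ‖a‖ ≤ C * ‖f a‖) {g : E →L[𝕜] E} {K : ℝ} (hK : 0 ≤ K)
    (hg : ∀ a, ‖f (g a)‖ ≤ K * ‖f a‖) : ‖g‖ ≤ ‖f‖ * C * K := by
  rcases lt_or_ge C 0 with C_neg | C_nonneg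
  · have all_norms_zero (a : E) : ‖a‖ = 0 := le_antisymm
      ((hC a).trans (mul_nonpos_of_nonpos_of_nonneg C_neg.le (norm_nonneg _))) (norm_nonneg a)
    have norm_f : ‖f‖ = 0 := le_antisymm
      (f.opNorm_le_bound le_rfl fun a => by simpa [all_norms_zero a] using f.le_opNorm a)
      (norm_nonneg f)
    rw [norm_f, zero_mul, zero_mul]
    exact g.opNorm_le_bound le_rfl fun a => by simp [all_norms_zero]
  refine g.opNorm_le_bound (by positivity) fun a => ?_
  calc ‖g a‖ ≤ C * ‖f (g a)‖ := hC _
    _ ≤ C * (K * (‖f‖ * ‖a‖)) := by gcongr; exact (hg a).trans (by gcongr; exact f.le_opNorm a)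
    _ = ‖f‖ * C * K * ‖a‖ := by ring

theorem norm_le_of_tendsto_on_dense [SeminormedAddCommGroup E] [NormedSpace 𝕜 E]
    {ι : Type*} {l : Filter ι} [l.NeBot] {T : E →L[𝕜] F} {S : ι → E →L[𝕜] F}
    {s : Set E} (hs : Dense s) {K : ℝ} (hS : ∀ i, ‖S i‖ ≤ K)
    (hlim : ∀ x ∈ s, Tendsto (fun i => S i x) l (𝓝 (T x))) : ‖T‖ ≤ K := by
  obtain ⟨i₀⟩ : Nonempty ι := l.nonempty_of_neBot
  have isClosed_bound : IsClosed {x | ‖T x‖ ≤ K * ‖x‖} := isClosed_le (by fun_prop) (by fun_prop)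
  have bound_on_dense : s ⊆ {x | ‖T x‖ ≤ K * ‖x‖} := fun x hx =>
    le_of_tendsto (hlim x hx).norm (.of_forall fun i => (S i).le_of_opNorm_le (hS i) x)
  exact T.opNorm_le_bound ((norm_nonneg _).trans (hS i₀)) fun x =>
    closure_minimal bound_on_dense isClosed_bound (hs x)

end BoundedOperators

section NondegenerateModules

variable {𝕜 A X : Type*} [NontriviallyNormedField 𝕜]

theorem eq_of_mul_map_eq [SeminormedAddCommGroup A] [NormedSpace 𝕜 A]
    [NormedAddCommGroup X] [NormedSpace 𝕜 X] {π : A →L[𝕜] X →L[𝕜] X}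
    (hnd : Dense (Submodule.span 𝕜 (Set.range fun p : A × X => π p.1 p.2) : Set X))
    {T T' : X →L[𝕜] X} (h : ∀ a, T * π a = T' * π a) : T = T' := by
  refine ContinuousLinearMap.ext_on hnd ?_
  rintro _ ⟨⟨a, x⟩, rfl⟩
  exact DFunLike.congr_fun (h a) x

variable [NonUnitalSeminormedRing A] [NormedSpace 𝕜 A]
  [SeminormedAddCommGroup X] [NormedSpace 𝕜 X] {π : A →L[𝕜] X →L[𝕜] X}
  {ι : Type*} {l : Filter ι} {e : ι → A}

theorem tendsto_map_apply_of_mem_span (he_lim : ∀ a : A, Tendsto (fun i => e i * a) l (𝓝 a))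
    (hπmul : ∀ a b : A, π (a * b) = π a * π b) {x : X}
    (hx : x ∈ Submodule.span 𝕜 (Set.range fun p : A × X => π p.1 p.2)) :
    Tendsto (fun i => π (e i) x) l (𝓝 x) := by
  induction hx using Submodule.span_induction with
  | mem x hx =>
    obtain ⟨⟨a, y⟩, rfl⟩ := hx
    have continuous_apply : Continuous fun b : A => π b y := by fun_prop
    refine ((continuous_apply.tendsto a).comp (he_lim a)).congr fun i => ?_
    exact DFunLike.congr_fun (hπmul (e i) a) y
  | zero => simpa using tendsto_const_nhds
  | add x y _ _ hx hy => simpa using hx.add hy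
  | smul c x _ hx => simpa using hx.const_smul c

theorem norm_le_of_mul_map_eq [l.NeBot] {m : ℝ} (he_bdd : ∀ i, ‖e i‖ ≤ m)
    (he_lim : ∀ a : A, Tendsto (fun i => e i * a) l (𝓝 a))
    (hπmul : ∀ a b : A, π (a * b) = π a * π b)
    (hnd : Dense (Submodule.span 𝕜 (Set.range fun p : A × X => π p.1 p.2) : Set X))
    {T : X →L[𝕜] X} {L : A →L[𝕜] A} (hT : ∀ a, T * π a = π (L a)) :
    ‖T‖ ≤ m * ‖π‖ * ‖L‖ := by
  refine norm_le_of_tendsto_on_dense (l := l) (S := fun i => π (L (e i))) hnd (fun i => ?_)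
    fun x hx => ?_
  · calc ‖π (L (e i))‖ ≤ ‖π‖ * (‖L‖ * m) :=
          π.le_opNorm_of_le (L.le_opNorm_of_le (he_bdd i))
      _ = m * ‖π‖ * ‖L‖ := by ring
  · simp only [← hT]
    exact (T.continuous.tendsto x).comp (tendsto_map_apply_of_mem_span he_lim hπmul hx)

end NondegenerateModules

/-- The operator `T` implements the pair `(L, R)` of maps on `A` through `π`. This is the relation
between `T = π̄_l(L)` and a double centralizer `(L, R)`, stated without reference to `π̄_l`; read
from right to left it says `L = L_T` and `R = R_T`. -/
structure Implements {𝕜 A X : Type*} [NontriviallyNormedField 𝕜] [SeminormedAddCommGroup A]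
    [NormedSpace 𝕜 A] [SeminormedAddCommGroup X] [NormedSpace 𝕜 X]
    (π : A →L[𝕜] X →L[𝕜] X) (T : X →L[𝕜] X) (L R : A →L[𝕜] A) : Prop where
  mul_map : ∀ a, T * π a = π (L a)
  map_mul : ∀ a, π a * T = π (R a)

namespace Implements

variable {𝕜 A X : Type*} [NontriviallyNormedField 𝕜] [SeminormedAddCommGroup A]
  [NormedSpace 𝕜 A] [SeminormedAddCommGroup X] [NormedSpace 𝕜 X] {π : A →L[𝕜] X →L[𝕜] X}
  {T : X →L[𝕜] X} {L R L' R' : A →L[𝕜] A}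

theorem unique (h : Implements π T L R) (h' : Implements π T L' R')
    (hπinj : Function.Injective π) : L = L' ∧ R = R' :=
  ⟨ContinuousLinearMap.ext fun a => hπinj <| (h.mul_map a).symm.trans (h'.mul_map a),
    ContinuousLinearMap.ext fun a => hπinj <| (h.map_mul a).symm.trans (h'.map_mul a)⟩

theorem max_norm_le (h : Implements π T L R) {C : ℝ} (hC : ∀ a, ‖a‖ ≤ C * ‖π a‖) :
    max ‖L‖ ‖R‖ ≤ ‖π‖ * C * ‖T‖ := by
  refine max_le (norm_le_of_norm_map_le hC (norm_nonneg T) fun a => ?_)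
    (norm_le_of_norm_map_le hC (norm_nonneg T) fun a => ?_)
  · exact h.mul_map a ▸ norm_mul_le T (π a)
  · exact h.map_mul a ▸ (norm_mul_le (π a) T).trans_eq (mul_comm _ _)

theorem exists_of_normalizes (hπ : IsEmbedding π)
    (hT : ∀ a, (∃ b, T * π a = π b) ∧ ∃ b, π a * T = π b) :
    ∃ L R : A →L[𝕜] A, Implements π T L R := by
  let leftMul := ContinuousLinearMap.mul 𝕜 (X →L[𝕜] X) T ∘SL π
  let rightMul := (ContinuousLinearMap.mul 𝕜 (X →L[𝕜] X)).flip T ∘SL π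
  obtain ⟨L, hL⟩ := exists_map_eq_of_forall_mem_range hπ leftMul fun a =>
    (hT a).1.imp fun _ => Eq.symm
  obtain ⟨R, hR⟩ := exists_map_eq_of_forall_mem_range hπ rightMul fun a =>
    (hT a).2.imp fun _ => Eq.symm
  exact ⟨L, R, fun a => (hL a).symm, fun a => (hR a).symm⟩

end Implements

section Centralizers

variable {𝕜 A X : Type*} [RCLike 𝕜] [NonUnitalNormedRing A] [NormedSpace 𝕜 A]
  [IsScalarTower 𝕜 A A] [SMulCommClass 𝕜 A A]

theorem mul_mem_leftCentralizers (a : A) :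
    ContinuousLinearMap.mul 𝕜 A a ∈ LeftCentralizers 𝕜 A :=
  fun b c => (mul_assoc a b c).symm

variable [SeminormedAddCommGroup X] [NormedSpace 𝕜 X] {π : A →L[𝕜] X →L[𝕜] X}

theorem Implements.isDoubleCentralizer {T : X →L[𝕜] X} {L R : A →L[𝕜] A}
    (h : Implements π T L R) (hπmul : ∀ a b : A, π (a * b) = π a * π b)
    (hπinj : Function.Injective π) : IsDoubleCentralizer 𝕜 L R := by
  refine ⟨fun a b => hπinj ?_, fun a b => hπinj ?_, fun a b => hπinj ?_⟩
  · rw [← h.mul_map, hπmul, hπmul, ← h.mul_map, mul_assoc]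
  · rw [← h.map_mul, hπmul, hπmul, ← h.map_mul, mul_assoc]
  · rw [hπmul, hπmul, ← h.mul_map, ← h.map_mul, mul_assoc]

theorem IsDoubleCentralizer.implements {L R : A →L[𝕜] A} (hDC : IsDoubleCentralizer 𝕜 L R)
    {πbl : LeftCentralizers 𝕜 A → X →L[𝕜] X}
    (hπbl_mul : ∀ (L K : LeftCentralizers 𝕜 A)
      (h : (L : A →L[𝕜] A) * K ∈ LeftCentralizers 𝕜 A),
      πbl ⟨(L : A →L[𝕜] A) * K, h⟩ = πbl L * πbl K)
    (hπbl_lam : ∀ (a : A) (h : ContinuousLinearMap.mul 𝕜 A a ∈ LeftCentralizers 𝕜 A),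
      πbl ⟨ContinuousLinearMap.mul 𝕜 A a, h⟩ = π a) :
    Implements π (πbl ⟨L, hDC.1⟩) L R := by
  have mul_eq_map {K K' : LeftCentralizers 𝕜 A} {b : A}
      (hK : (K : A →L[𝕜] A) * K' = ContinuousLinearMap.mul 𝕜 A b) : πbl K * πbl K' = π b := by
    have mem : (K : A →L[𝕜] A) * K' ∈ LeftCentralizers 𝕜 A := hK ▸ mul_mem_leftCentralizers b
    rw [← hπbl_mul K K' mem, ← hπbl_lam b (mul_mem_leftCentralizers b)]
    exact congrArg πbl (Subtype.ext hK)
  refine ⟨fun a => ?_, fun a => ?_⟩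
  · rw [← hπbl_lam a (mul_mem_leftCentralizers a)]
    exact mul_eq_map (ContinuousLinearMap.ext fun b => hDC.1 a b)
  · rw [← hπbl_lam a (mul_mem_leftCentralizers a)]
    exact mul_eq_map (ContinuousLinearMap.ext fun b => hDC.2.2 a b)

end Centralizers

theorem double_centralizers_embed_as_normalizer_general
    {𝕜 : Type*} [RCLike 𝕜]
    {A : Type*} [NonUnitalNormedRing A] [NormedSpace 𝕜 A]
    [IsScalarTower 𝕜 A A] [SMulCommClass 𝕜 A A]
    {X : Type*} [NormedAddCommGroup X] [NormedSpace 𝕜 X]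
    (m : ℝ) {ι : Type*} (l : Filter ι) [l.NeBot] (e : ι → A)
    (he_bdd : ∀ i, ‖e i‖ ≤ m)
    (he_lim : ∀ a : A, Tendsto (fun i => e i * a) l (𝓝 a))
    (π : A →L[𝕜] X →L[𝕜] X)
    (hπmul : ∀ a b : A, π (a * b) = π a * π b)
    (hnd : Dense (Submodule.span 𝕜 (Set.range fun p : A × X => π p.1 p.2) : Set X))
    (C : ℝ) (hC : ∀ a : A, ‖a‖ ≤ C * ‖π a‖)
    (πbl : LeftCentralizers 𝕜 A → X →L[𝕜] X)
    (hπbl_mul : ∀ (L K : LeftCentralizers 𝕜 A)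
      (h : (L : A →L[𝕜] A) * K ∈ LeftCentralizers 𝕜 A),
      πbl ⟨(L : A →L[𝕜] A) * K, h⟩ = πbl L * πbl K)
    (hπbl_lam : ∀ (a : A) (h : ContinuousLinearMap.mul 𝕜 A a ∈ LeftCentralizers 𝕜 A),
      πbl ⟨ContinuousLinearMap.mul 𝕜 A a, h⟩ = π a) :
    (∀ (L R : A →L[𝕜] A) (hDC : IsDoubleCentralizer 𝕜 L R) (a : A),
      πbl ⟨L, hDC.1⟩ * π a = π (L a) ∧ π a * πbl ⟨L, hDC.1⟩ = π (R a)) ∧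
    (∀ (L R L' R' : A →L[𝕜] A) (hDC : IsDoubleCentralizer 𝕜 L R)
      (hDC' : IsDoubleCentralizer 𝕜 L' R'),
      πbl ⟨L, hDC.1⟩ = πbl ⟨L', hDC'.1⟩ → L = L' ∧ R = R') ∧
    (∀ T : X →L[𝕜] X,
      (∀ a : A, (∃ b : A, T * π a = π b) ∧ (∃ b : A, π a * T = π b)) →
      ∃ (L R : A →L[𝕜] A) (hDC : IsDoubleCentralizer 𝕜 L R),
        πbl ⟨L, hDC.1⟩ = T ∧ (∀ a : A, π (L a) = T * π a) ∧
        (∀ a : A, π (R a) = π a * T)) ∧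
    (∀ (L R : A →L[𝕜] A) (hDC : IsDoubleCentralizer 𝕜 L R),
      ‖πbl ⟨L, hDC.1⟩‖ ≤ m * ‖π‖ * max ‖L‖ ‖R‖ ∧
      max ‖L‖ ‖R‖ ≤ ‖π‖ * C * ‖πbl ⟨L, hDC.1⟩‖) := by
  have implements (L R : A →L[𝕜] A) (hDC : IsDoubleCentralizer 𝕜 L R) :
      Implements π (πbl ⟨L, hDC.1⟩) L R := hDC.implements hπbl_mul hπbl_lam
  have isEmbedding_π : IsEmbedding π := isEmbedding_of_norm_le_mul_norm_map π hC
  refine ⟨fun L R hDC a => ?_, fun L R L' R' hDC hDC' heq => ?_, fun T hT => ?_, fun L R hDC => ?_⟩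
  · exact ⟨(implements L R hDC).mul_map a, (implements L R hDC).map_mul a⟩
  · exact (implements L R hDC).unique (heq ▸ implements L' R' hDC') isEmbedding_π.injective
  · obtain ⟨L, R, hLR⟩ := Implements.exists_of_normalizes isEmbedding_π hT
    have hDC : IsDoubleCentralizer 𝕜 L R := hLR.isDoubleCentralizer hπmul isEmbedding_π.injective
    refine ⟨L, R, hDC, eq_of_mul_map_eq hnd fun a => ?_, fun a => (hLR.mul_map a).symm,
      fun a => (hLR.map_mul a).symm⟩
    exact ((implements L R hDC).mul_map a).trans (hLR.mul_map a).symm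
  · refine ⟨?_, (implements L R hDC).max_norm_le hC⟩
    have m_nonneg : 0 ≤ m := (norm_nonneg _).trans (he_bdd l.nonempty_of_neBot.some)
    calc ‖πbl ⟨L, hDC.1⟩‖ ≤ m * ‖π‖ * ‖L‖ :=
          norm_le_of_mul_map_eq he_bdd he_lim hπmul hnd (implements L R hDC).mul_map
      _ ≤ m * ‖π‖ * max ‖L‖ ‖R‖ := by gcongr; exact le_max_left _ _

/-- **Embedding of the double centralizer algebra as the normalizer.** Let `A` be a normed
algebra with an `m`-bounded approximate left identity, `X` a Banach space, and
`π_l : A → B(X)` an injective bounded homomorphism making `X` a non-degenerate faithful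
normed left `A`-module with bounded inverse `π_l⁻¹` (bounded by `C`). Then
`π̄_l ∘ φ_l : M(A) → B(X)` is an algebra isomorphism from `M(A)` onto the normalizer
`N(π_l(A), B(X))`, with `‖π̄_l ∘ φ_l‖ ≤ m‖π_l‖` and `‖(π̄_l ∘ φ_l)⁻¹‖ ≤ ‖π_l‖·‖π_l⁻¹‖`
for the operator norm of `B(X)` (the norm on `M(A)` being `max(‖L‖, ‖R‖)`); the inverse is
`T ↦ (L_T, R_T)` with `L_T(a) = π_l⁻¹(T π_l(a))` and `R_T(a) = π_l⁻¹(π_l(a) T)`. -/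
theorem double_centralizers_embed_as_normalizer
    {𝕜 : Type*} [RCLike 𝕜]
    {A : Type*} [NonUnitalNormedRing A] [NormedSpace 𝕜 A]
    [IsScalarTower 𝕜 A A] [SMulCommClass 𝕜 A A]
    {X : Type*} [NormedAddCommGroup X] [NormedSpace 𝕜 X] [CompleteSpace X]
    (m : ℝ) {ι : Type*} (l : Filter ι) [l.NeBot] (e : ι → A)
    (he_bdd : ∀ i, ‖e i‖ ≤ m)
    (he_lim : ∀ a : A, Tendsto (fun i => e i * a) l (𝓝 a))
    (π : A →L[𝕜] X →L[𝕜] X)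
    (hπmul : ∀ a b : A, π (a * b) = π a * π b)
    (hπinj : Function.Injective π)
    (hnd : Dense (Submodule.span 𝕜 (Set.range fun p : A × X => π p.1 p.2) : Set X))
    (C : ℝ) (hC : ∀ a : A, ‖a‖ ≤ C * ‖π a‖)
    -- `π̄_l : M_l(A) → B(X)`, the canonical homomorphism with `π̄_l ∘ λ = π_l`
    (πbl : LeftCentralizers 𝕜 A → X →L[𝕜] X)
    (hπbl_add : ∀ (L K : LeftCentralizers 𝕜 A)
      (h : (L : A →L[𝕜] A) + K ∈ LeftCentralizers 𝕜 A),
      πbl ⟨(L : A →L[𝕜] A) + K, h⟩ = πbl L + πbl K)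
    (hπbl_smul : ∀ (c : 𝕜) (L : LeftCentralizers 𝕜 A)
      (h : c • (L : A →L[𝕜] A) ∈ LeftCentralizers 𝕜 A),
      πbl ⟨c • (L : A →L[𝕜] A), h⟩ = c • πbl L)
    (hπbl_mul : ∀ (L K : LeftCentralizers 𝕜 A)
      (h : (L : A →L[𝕜] A) * K ∈ LeftCentralizers 𝕜 A),
      πbl ⟨(L : A →L[𝕜] A) * K, h⟩ = πbl L * πbl K)
    (hπbl_lam : ∀ (a : A) (h : ContinuousLinearMap.mul 𝕜 A a ∈ LeftCentralizers 𝕜 A),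
      πbl ⟨ContinuousLinearMap.mul 𝕜 A a, h⟩ = π a) :
    -- `π̄_l ∘ φ_l` maps `M(A)` into the normalizer `N(π_l(A), B(X))`:
    (∀ (L R : A →L[𝕜] A) (hDC : IsDoubleCentralizer 𝕜 L R) (a : A),
      πbl ⟨L, hDC.1⟩ * π a = π (L a) ∧ π a * πbl ⟨L, hDC.1⟩ = π (R a)) ∧
    -- it is injective on `M(A)`:
    (∀ (L R L' R' : A →L[𝕜] A) (hDC : IsDoubleCentralizer 𝕜 L R)
      (hDC' : IsDoubleCentralizer 𝕜 L' R'),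
      πbl ⟨L, hDC.1⟩ = πbl ⟨L', hDC'.1⟩ → L = L' ∧ R = R') ∧
    -- it is onto `N(π_l(A), B(X))`, with inverse `T ↦ (L_T, R_T)`:
    (∀ T : X →L[𝕜] X,
      (∀ a : A, (∃ b : A, T * π a = π b) ∧ (∃ b : A, π a * T = π b)) →
      ∃ (L R : A →L[𝕜] A) (hDC : IsDoubleCentralizer 𝕜 L R),
        πbl ⟨L, hDC.1⟩ = T ∧ (∀ a : A, π (L a) = T * π a) ∧
        (∀ a : A, π (R a) = π a * T)) ∧
    -- `‖π̄_l ∘ φ_l‖ ≤ m ‖π_l‖` and `‖(π̄_l ∘ φ_l)⁻¹‖ ≤ ‖π_l‖ ‖π_l⁻¹‖`: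
    (∀ (L R : A →L[𝕜] A) (hDC : IsDoubleCentralizer 𝕜 L R),
      ‖πbl ⟨L, hDC.1⟩‖ ≤ m * ‖π‖ * max ‖L‖ ‖R‖ ∧
      max ‖L‖ ‖R‖ ≤ ‖π‖ * C * ‖πbl ⟨L, hDC.1⟩‖) :=
  double_centralizers_embed_as_normalizer_general m l e he_bdd he_lim π hπmul hnd C hC πbl
    hπbl_mul hπbl_lam
end
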